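/- arXiv:0712.2837 — 2 statements merged into one kernel-verified Lean document; each statement's English description precedes it below -/
import Mathlib

section
/- Let n ≥ 2 and let w, x : Fin n → ℚ be weighting vectors. The ordinal rankings of T_w(p) and T_x(p) agree for every full-ranking profile p — that is, for every p : Equiv.Perm (Fin n) → ℚ and all candidates c, d one has T_w(p)(c) ≤ T_w(p)(d) if and only if T_x(p)(c) ≤ T_x(p)(d) — if and only if w ∼ x, i.e., there exist rationals α > 0 and β with x = α·w + β·𝟙. -/
/-- The positional voting map: `T_w(p)(c) = Σ_σ p(σ) · w(σ⁻¹ c)`. -/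
noncomputable def positionalOutcome (n : ℕ) (w : Fin n → ℚ)
    (p : Equiv.Perm (Fin n) → ℚ) : Fin n → ℚ :=
  fun c => ∑ σ : Equiv.Perm (Fin n), p σ * w (σ⁻¹ c)

/-!
For fixed candidates `c ≠ d`, the margin `p ↦ T_w(p)(d) - T_w(p)(c)` is a linear functional of the
profile. The rankings agree on `c, d` for all profiles exactly when the margins of `w` and of `x`
are nonnegative on the same half-space, which forces them to be positive multiples of each other.
The unanimous profile on a ballot `σ` has margin `w (σ⁻¹ d) - w (σ⁻¹ c)`, and since permutations act
doubly transitively every difference `w j - w i` arises in this way. Hence the differences of `x`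
are those of `w` scaled by one `α > 0`.
-/

open Equiv

theorem eq_apply_smul_of_ker_le_ker {R M : Type*} [CommRing R] [AddCommGroup M] [Module R M]
    {f g : M →ₗ[R] R} (h : f.ker ≤ g.ker) {v : M} (hv : f v = 1) : g = g v • f := by
  ext u
  have hu : g (u - f u • v) = 0 := h (by simp [hv])
  simpa [sub_eq_zero, mul_comm] using hu

theorem nonneg_iff_nonneg_iff_exists_pos_smul_eq {K E : Type*} [Field K] [LinearOrder K]
    [IsStrictOrderedRing K] [AddCommGroup E] [Module K E] {f g : E →ₗ[K] K} :
    (∀ v, 0 ≤ f v ↔ 0 ≤ g v) ↔ ∃ α : K, 0 < α ∧ g = α • f := by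
  refine ⟨fun h => ?_, ?_⟩
  · have nonpos_iff (v : E) : f v ≤ 0 ↔ g v ≤ 0 := by simpa using h (-v)
    have eq_zero_iff (v : E) : f v = 0 ↔ g v = 0 := by
      simp only [le_antisymm_iff, h, nonpos_iff]
    by_cases hf : f = 0
    · refine ⟨1, one_pos, ?_⟩
      ext v
      simpa [hf] using eq_zero_iff v
    · obtain ⟨v, hv⟩ := LinearMap.surjective hf 1
      have hgv : 0 < g v := by
        rw [← not_le, ← nonpos_iff, hv, not_le]
        exact one_pos
      exact ⟨g v, hgv, eq_apply_smul_of_ker_le_ker (fun u => (eq_zero_iff u).mp) hv⟩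
  · rintro ⟨α, hα, rfl⟩ v
    simp [mul_nonneg_iff_of_pos_left hα]

theorem exists_eq_mul_add_iff_sub_eq_mul_sub {ι R : Type*} [Ring R] {w x : ι → R} {α : R} :
    (∃ β, x = fun i => α * w i + β) ↔ ∀ i j, x j - x i = α * (w j - w i) := by
  refine ⟨?_, fun h => ?_⟩
  · rintro ⟨β, rfl⟩ i j
    rw [mul_sub, add_sub_add_right_eq_sub]
  · rcases isEmpty_or_nonempty ι with _ | ⟨⟨i⟩⟩
    · exact ⟨0, Subsingleton.elim _ _⟩
    · refine ⟨x i - α * w i, funext fun j => ?_⟩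
      rw [sub_eq_iff_eq_add.mp (h i j), mul_sub]
      abel

theorem exists_perm_inv_apply_eq {ι : Type*} {c d i j : ι} (hcd : c ≠ d) (hij : i ≠ j) :
    ∃ σ : Perm ι, σ⁻¹ c = i ∧ σ⁻¹ d = j := by
  obtain ⟨τ, hc, hd⟩ :=
    MulAction.is_two_pretransitive_iff.mp (Perm.isMultiplyPretransitive ι 2) hcd hij
  exact ⟨τ⁻¹, by simpa using hc, by simpa using hd⟩

section Positional

variable {ι : Type*} [Fintype ι] [DecidableEq ι]

section Semiring

variable {R : Type*} [Semiring R] (w : ι → R)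

/-- The positional voting map `T_w` for an arbitrary finite set `ι` of candidates and weights in a
semiring, as a linear map on profiles. As in `positionalOutcome`, a ballot `σ` sends positions to
candidates, so it contributes the vector of scores `w ∘ σ⁻¹`. -/
def positionalMap : (Perm ι → R) →ₗ[R] ι → R :=
  Fintype.linearCombination R fun σ => w ∘ ⇑σ⁻¹

theorem positionalMap_apply (p : Perm ι → R) (c : ι) :
    positionalMap w p c = ∑ σ, p σ * w (σ⁻¹ c) := by
  simp [positionalMap, Fintype.linearCombination_apply]

theorem positionalMap_single (σ : Perm ι) (r : R) (c : ι) :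
    positionalMap w (Pi.single σ r) c = r * w (σ⁻¹ c) := by
  simp [positionalMap]

end Semiring

/-- The margin by which candidate `d` beats candidate `c` under the weighting vector `w`, as a
linear functional of the profile. -/
def positionalMargin {R : Type*} [CommRing R] (w : ι → R) (c d : ι) : (Perm ι → R) →ₗ[R] R :=
  LinearMap.proj d ∘ₗ positionalMap w - LinearMap.proj c ∘ₗ positionalMap w

section CommRing

variable {R : Type*} [CommRing R] {w x : ι → R} {c d : ι} {α : R}

theorem positionalMargin_apply (p : Perm ι → R) :
    positionalMargin w c d p = positionalMap w p d - positionalMap w p c :=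
  rfl

theorem positionalMargin_single_one (σ : Perm ι) :
    positionalMargin w c d (Pi.single σ 1) = w (σ⁻¹ d) - w (σ⁻¹ c) := by
  simp only [positionalMargin_apply, positionalMap_single, one_mul]

theorem positionalMargin_eq_smul (h : ∀ i j, x j - x i = α * (w j - w i)) (c d : ι) :
    positionalMargin x c d = α • positionalMargin w c d := by
  ext σ
  simpa [positionalMargin_single_one] using h (σ⁻¹ c) (σ⁻¹ d)

theorem sub_eq_mul_sub_of_positionalMargin_eq_smul (hcd : c ≠ d)
    (h : positionalMargin x c d = α • positionalMargin w c d) (i j : ι) :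
    x j - x i = α * (w j - w i) := by
  rcases eq_or_ne i j with rfl | hij
  · simp only [sub_self, mul_zero]
  · obtain ⟨σ, rfl, rfl⟩ := exists_perm_inv_apply_eq hcd hij
    simpa [positionalMargin_single_one] using LinearMap.congr_fun h (Pi.single σ 1)

end CommRing

variable {K : Type*} [Field K] [LinearOrder K] [IsStrictOrderedRing K]

theorem positionalMap_le_iff_le_iff_exists_margin_eq_smul {w x : ι → K} {c d : ι} :
    (∀ p, positionalMap w p c ≤ positionalMap w p d ↔
      positionalMap x p c ≤ positionalMap x p d) ↔
    ∃ α : K, 0 < α ∧ positionalMargin x c d = α • positionalMargin w c d := by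
  simp only [← nonneg_iff_nonneg_iff_exists_pos_smul_eq, positionalMargin_apply, sub_nonneg]

theorem ordinal_rankings_agree_iff_equivalent_general (w x : ι → K) :
    (∀ p c d, positionalMap w p c ≤ positionalMap w p d ↔
      positionalMap x p c ≤ positionalMap x p d) ↔
    ∃ α β : K, 0 < α ∧ x = fun i => α * w i + β := by
  simp only [exists_and_left, exists_eq_mul_add_iff_sub_eq_mul_sub]
  refine ⟨fun agree => ?_, ?_⟩
  · rcases subsingleton_or_nontrivial ι with _ | _
    · exact ⟨1, one_pos, fun i j => by simp [Subsingleton.elim i j]⟩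
    · obtain ⟨c, d, hcd⟩ := exists_pair_ne ι
      obtain ⟨α, hα, hmargin⟩ :=
        positionalMap_le_iff_le_iff_exists_margin_eq_smul.mp fun p => agree p c d
      exact ⟨α, hα, sub_eq_mul_sub_of_positionalMargin_eq_smul hcd hmargin⟩
  · rintro ⟨α, hα, hsub⟩ p c d
    exact positionalMap_le_iff_le_iff_exists_margin_eq_smul.mpr
      ⟨α, hα, positionalMargin_eq_smul hsub c d⟩ p

end Positional

/-- For `n ≥ 2`, the ordinal rankings of `T_w(p)` and `T_x(p)`
agree for every full-ranking profile `p` if and only if `w ∼ x`, i.e. there are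
rationals `α > 0` and `β` with `x = α·w + β·𝟙`. -/
theorem ordinal_rankings_agree_iff_equivalent (n : ℕ) (hn : 2 ≤ n)
    (w x : Fin n → ℚ) :
    (∀ p : Equiv.Perm (Fin n) → ℚ, ∀ c d : Fin n,
        positionalOutcome n w p c ≤ positionalOutcome n w p d ↔
        positionalOutcome n x p c ≤ positionalOutcome n x p d) ↔
    (∃ α β : ℚ, 0 < α ∧ x = fun c => α * w c + β) := by
  simpa only [positionalOutcome, positionalMap_apply] using
    ordinal_rankings_agree_iff_equivalent_general w x
end

section
/- Let n ≥ 3, 1 ≤ k ≤ n − 2, and τ ∈ ℚ with 0 ≤ τ ≤ 1, and let w : Fin (k+1) → ℚ be a weighting vector. Then the positional map T_w on top-k profiles is recoverable from the generalized pairs map P^k_τ — i.e., there exists a ℚ-linear map R : (Fin n × Fin n → ℚ) → (Fin n → ℚ) with T_w(p) = R(P^k_τ(p)) for every top-k profile p — if and only if the sum-zero part of the extension w̄ lies in the ℚ-span of the sum-zero parts of b̄ and b̄^τ, where b, b^τ : Fin (k+1) → ℚ are given by b(i) = b^τ(i) = n − 1 − i for i < k, b(k) = (n − k − 1)/2, and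 b^τ(k) = τ·(n − k − 1). -/
/-- The weight `w*(f, c)` that a top-`k` ballot `f : Fin k ↪ Fin n` assigns to
candidate `c` under a weighting vector `w : Fin (k+1) → ℚ`. -/
def topkWeight {n k : ℕ} (w : Fin (k + 1) → ℚ) (f : Fin k ↪ Fin n) (c : Fin n) : ℚ :=
  (∑ i : Fin k, if f i = c then w i.castSucc else 0) +
    (if ∀ i, f i ≠ c then w (Fin.last k) else 0)

/-- The positional map `T_w` on top-`k` profiles, as a `ℚ`-linear map. -/
noncomputable def topkPositionalMap (n k : ℕ) (w : Fin (k + 1) → ℚ) :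
    ((Fin k ↪ Fin n) → ℚ) →ₗ[ℚ] (Fin n → ℚ) where
  toFun p := fun c => ∑ f : Fin k ↪ Fin n, p f * topkWeight w f c
  map_add' p q := by funext c; simp [add_mul, Finset.sum_add_distrib]
  map_smul' a p := by funext c; simp [Finset.mul_sum, mul_assoc]

/-- The contribution `u_f(c, d)` of a top-`k` ballot `f` to the generalized
pairs map `P^k_τ`. -/
def pairContribution {n k : ℕ} (τ : ℚ) (f : Fin k ↪ Fin n) (c d : Fin n) : ℚ :=
  if c = d then 0
  else if ∃ i, f i = c ∧ ∀ j, f j = d → i < j then 1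
  else if (¬ ∃ i, f i = c) ∧ (¬ ∃ j, f j = d) then τ
  else 0

/-- The generalized pairs map `P^k_τ`, as a `ℚ`-linear map. -/
noncomputable def generalizedPairsMap (n k : ℕ) (τ : ℚ) :
    ((Fin k ↪ Fin n) → ℚ) →ₗ[ℚ] (Fin n × Fin n → ℚ) where
  toFun p := fun cd => ∑ f : Fin k ↪ Fin n, p f * pairContribution τ f cd.1 cd.2
  map_add' p q := by funext cd; simp [add_mul, Finset.sum_add_distrib]
  map_smul' a p := by funext cd; simp [Finset.mul_sum, mul_assoc]

/-- The extension `w̄ : Fin n → ℚ` of a top-`k` weighting vector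
`w : Fin (k+1) → ℚ`: it agrees with `w` on the first `k` coordinates and
repeats `w(k)` on the remaining `n − k` coordinates. -/
def extendWeight (n k : ℕ) (w : Fin (k + 1) → ℚ) : Fin n → ℚ :=
  fun j => if h : (j : ℕ) < k then w ⟨(j : ℕ), Nat.lt_succ_of_lt h⟩ else w (Fin.last k)

/-- The sum-zero part `v̂ = v − ((Σ_c v(c))/n)·𝟙` of a vector `v : Fin n → ℚ`. -/
def sumZeroPart (n : ℕ) (v : Fin n → ℚ) : Fin n → ℚ :=
  fun c => v c - (∑ c', v c') / n

/-!
A linear map recovering `T_w` from `P^k_τ` is given by coefficients `r c a b`, expressing the score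
of `c` through the tallies of the pairs `(a, b)`. Both maps commute with relabelling candidates, so
averaging over all permutations makes `r` invariant. The tallies vanish at `a = b`, and off that
diagonal an invariant `r` takes three values, according to whether `c = a`, `c = b` or neither. So
the recoverable scores are the combinations of the wins `∑ d, u_f(c, d)`, the losses
`∑ d, u_f(d, c)` and the total `∑ a, ∑ b, u_f(a, b)`.

The wins are the scores of the weights `b^τ`, and `b = b^{1/2}`. Since
`u_f(c, d) - u_f(d, c)` does not depend on `τ`, the losses are `b^τ - 2 b + (n - 1)`. The total is
the sum of `b̄^τ`, independent of the ballot. When it is nonzero it supplies all constants, and what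
remains is membership in the span of `b̄` and `b̄^τ` modulo constants.
-/

open Finset
open scoped BigOperators

theorem exists_mulVecLin_eq_comp_iff {K l m p : Type*} [CommSemiring K] [Fintype m] [Fintype p]
    (M : Matrix l m K) (N : Matrix p m K) :
    (∃ R : (p → K) →ₗ[K] (l → K), M.mulVecLin = R ∘ₗ N.mulVecLin) ↔
      ∃ Q : Matrix l p K, M = Q * N := by
  classical
  constructor
  · rintro ⟨R, hR⟩
    refine ⟨LinearMap.toMatrix' R, Matrix.toLin'.injective ?_⟩
    rw [Matrix.toLin'_mul, Matrix.toLin'_toMatrix']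
    exact hR
  · rintro ⟨Q, rfl⟩
    exact ⟨Q.mulVecLin, Matrix.mulVecLin_mul Q N⟩

theorem sum_ite_mem_zero {α K : Type*} [Fintype α] [DecidableEq α] [Ring K] (s : Finset α)
    (x : K) : ∑ a, (if a ∈ s then 0 else x) = (Fintype.card α - #s) * x := by
  simp only [sum_ite, sum_const_zero, zero_add, sum_const, filter_notMem_eq_sdiff, nsmul_eq_mul,
    ← compl_eq_univ_sdiff, card_compl, Nat.cast_sub (card_le_univ s)]

theorem sum_ite_add_ite_add_mul {α : Type*} [Fintype α] [DecidableEq α] {K : Type*}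
    [CommSemiring K] (x y z : K) (u : α → α → K) (c : α) :
    ∑ a, ∑ b, ((if a = c then x else 0) + (if b = c then y else 0) + z) * u a b =
      x * ∑ b, u c b + y * ∑ a, u a c + z * ∑ a, ∑ b, u a b := by
  simp only [add_mul, sum_add_distrib, ite_mul, zero_mul, mul_sum, sum_ite_eq', mem_univ, if_true]
  congr 2
  rw [sum_comm]
  simp

section PermInvariant

variable {α : Type*}

theorem exists_forall_eq_of_perm_invariant {β : Type*} [Nonempty β] {m : ℕ}
    {F : (Fin m ↪ α) → β} (hF : ∀ (σ : Equiv.Perm α) (x : Fin m ↪ α), F (σ • x) = F x) :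
    ∃ b, ∀ x, F x = b := by
  rcases isEmpty_or_nonempty (Fin m ↪ α) with _ | ⟨⟨y⟩⟩
  · exact ⟨Classical.arbitrary β, isEmptyElim⟩
  · refine ⟨F y, fun x => ?_⟩
    obtain ⟨σ, rfl⟩ := (Equiv.Perm.isMultiplyPretransitive α m).exists_smul_eq y x
    exact hF σ y

theorem exists_eq_ite_add_ite_add_of_perm_invariant [DecidableEq α] {K : Type*} [AddCommGroup K]
    {ρ : α → α → α → K}
    (hρ : ∀ (σ : Equiv.Perm α) (c a b : α), ρ (σ c) (σ a) (σ b) = ρ c a b) :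
    ∃ x y z : K, ∀ c a b, a ≠ b →
      ρ c a b = (if a = c then x else 0) + (if b = c then y else 0) + z := by
  obtain ⟨x, hx⟩ := exists_forall_eq_of_perm_invariant (m := 2)
    (F := fun e => ρ (e 0) (e 0) (e 1)) fun σ e => hρ σ _ _ _
  obtain ⟨y, hy⟩ := exists_forall_eq_of_perm_invariant (m := 2)
    (F := fun e => ρ (e 1) (e 0) (e 1)) fun σ e => hρ σ _ _ _
  obtain ⟨z, hz⟩ := exists_forall_eq_of_perm_invariant (m := 3)
    (F := fun e => ρ (e 0) (e 1) (e 2)) fun σ e => hρ σ _ _ _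
  refine ⟨x - z, y - z, z, fun c a b hab => ?_⟩
  have hinj : Function.Injective ![a, b] := injective_pair_iff_ne.2 hab
  by_cases hac : a = c
  · subst hac
    simpa [hab.symm] using hx ⟨_, hinj⟩
  by_cases hbc : b = c
  · subst hbc
    simpa [hab] using hy ⟨_, hinj⟩
  have hinj' : Function.Injective ![c, a, b] :=
    Fin.cons_injective_iff.2 ⟨by simp [Ne.symm hac, Ne.symm hbc], hinj⟩
  simpa [hac, hbc] using hz ⟨_, hinj'⟩

end PermInvariant

section SumZeroPart

variable {n : ℕ}

theorem sumZeroPart_add (u v : Fin n → ℚ) :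
    sumZeroPart n (u + v) = sumZeroPart n u + sumZeroPart n v := by
  funext j
  simp only [sumZeroPart, Pi.add_apply, sum_add_distrib]
  ring

theorem sumZeroPart_smul (x : ℚ) (v : Fin n → ℚ) :
    sumZeroPart n (x • v) = x • sumZeroPart n v := by
  funext j
  simp only [sumZeroPart, Pi.smul_apply, smul_eq_mul, ← mul_sum]
  ring

theorem sumZeroPart_eq_sumZeroPart_iff {u v : Fin n → ℚ} :
    sumZeroPart n u = sumZeroPart n v ↔ ∃ z, ∀ j, u j = v j + z := by
  constructor
  · intro h
    refine ⟨(∑ c, u c) / n - (∑ c, v c) / n, fun j => ?_⟩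
    have hj : u j - (∑ c, u c) / n = v j - (∑ c, v c) / n := congrFun h j
    linarith
  · rintro ⟨z, hz⟩
    funext j
    have hn : (n : ℚ) ≠ 0 := Nat.cast_ne_zero.2 j.pos.ne'
    simp only [sumZeroPart, hz, sum_add_distrib, sum_const, card_univ, Fintype.card_fin,
      nsmul_eq_mul]
    field_simp
    ring

theorem sumZeroPart_mem_span_pair_iff {u s t : Fin n → ℚ} :
    sumZeroPart n u ∈ Submodule.span ℚ {sumZeroPart n s, sumZeroPart n t} ↔
      ∃ x y z, ∀ j, u j = x * s j + y * t j + z := by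
  simp only [Submodule.mem_span_pair, ← sumZeroPart_smul, ← sumZeroPart_add,
    eq_comm (b := sumZeroPart n u), sumZeroPart_eq_sumZeroPart_iff, Pi.add_apply, Pi.smul_apply,
    smul_eq_mul]

end SumZeroPart

section Ballots

variable {n k : ℕ} (τ : ℚ) (w : Fin (k + 1) → ℚ) (f : Fin k ↪ Fin n)

theorem topkWeight_apply_self (i : Fin k) : topkWeight w f (f i) = w i.castSucc := by
  simp [topkWeight]

theorem topkWeight_of_forall_ne {c : Fin n} (hc : ∀ i, f i ≠ c) :
    topkWeight w f c = w (Fin.last k) := by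
  simp [topkWeight, hc]

theorem topkWeight_trans_perm (σ : Equiv.Perm (Fin n)) (c : Fin n) :
    topkWeight w (f.trans σ.toEmbedding) (σ c) = topkWeight w f c := by
  simp [topkWeight]

theorem pairContribution_trans_perm (σ : Equiv.Perm (Fin n)) (c d : Fin n) :
    pairContribution τ (f.trans σ.toEmbedding) (σ c) (σ d) = pairContribution τ f c d := by
  simp [pairContribution]

theorem pairContribution_self (c : Fin n) : pairContribution τ f c c = 0 := by
  simp [pairContribution]

theorem exists_perm_topkWeight_eq_extendWeight :
    ∃ σ : Equiv.Perm (Fin n), ∀ (w : Fin (k + 1) → ℚ) (j : Fin n),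
      topkWeight w f (σ j) = extendWeight n k w j := by
  have hk : k ≤ n := by simpa using Fintype.card_le_of_embedding f
  obtain ⟨σ, hσ⟩ := (Equiv.Perm.isMultiplyPretransitive (Fin n) k).exists_smul_eq
    (Fin.castLEEmb hk) f
  have hσ' (i : Fin k) : f i = σ (Fin.castLE hk i) := (DFunLike.congr_fun hσ i).symm
  refine ⟨σ, fun w j => ?_⟩
  by_cases hj : (j : ℕ) < k
  · rw [extendWeight, dif_pos hj]
    exact hσ' ⟨j, hj⟩ ▸ topkWeight_apply_self w f ⟨j, hj⟩
  · rw [extendWeight, dif_neg hj]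
    refine topkWeight_of_forall_ne w f fun i hi => hj ?_
    rw [← σ.injective ((hσ' i).symm.trans hi)]
    exact i.isLt

theorem sum_topkWeight : ∑ c, topkWeight w f c = ∑ j, extendWeight n k w j := by
  obtain ⟨σ, hσ⟩ := exists_perm_topkWeight_eq_extendWeight f
  simp only [← Equiv.sum_comp σ (topkWeight w f), hσ]

theorem forall_topkWeight_eq_iff_extendWeight (hk : k ≤ n) {u v w : Fin (k + 1) → ℚ}
    {x y z : ℚ} :
    (∀ (f : Fin k ↪ Fin n) c,
        topkWeight w f c = x * topkWeight u f c + y * topkWeight v f c + z) ↔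
      ∀ j, extendWeight n k w j = x * extendWeight n k u j + y * extendWeight n k v j + z := by
  constructor
  · intro h j
    obtain ⟨σ, hσ⟩ := exists_perm_topkWeight_eq_extendWeight (Fin.castLEEmb hk)
    simpa only [hσ] using h (Fin.castLEEmb hk) (σ j)
  · intro h f c
    obtain ⟨σ, hσ⟩ := exists_perm_topkWeight_eq_extendWeight f
    obtain ⟨j, rfl⟩ := σ.surjective c
    simpa only [hσ] using h j

end Ballots

section Borda

/-- The top-`k` Borda weights `b^τ` in which an unranked candidate earns `τ` points against each
of the other `n - k - 1` unranked candidates. The weights `b` are the case `τ = 1 / 2`. -/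
def bordaWeight (n k : ℕ) (τ : ℚ) : Fin (k + 1) → ℚ := fun i =>
  if (i : ℕ) < k then (n : ℚ) - 1 - ((i : ℕ) : ℚ) else τ * ((n : ℚ) - k - 1)

variable {n k : ℕ} (τ : ℚ) (f : Fin k ↪ Fin n) (c d : Fin n)

theorem bordaWeight_one_half :
    bordaWeight n k (1 / 2) = fun i : Fin (k + 1) =>
      if (i : ℕ) < k then (n : ℚ) - 1 - ((i : ℕ) : ℚ) else ((n : ℚ) - k - 1) / 2 := by
  simp only [funext_iff, bordaWeight, one_div_mul_eq_div, implies_true]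

theorem pairContribution_apply_self (i : Fin k) :
    pairContribution τ f (f i) d = if d ∈ (Iic i).map f then 0 else 1 := by
  have hbelow : (∀ j, f j = d → i < j) ↔ d ∉ (Iic i).map f := by
    simp only [mem_map, mem_Iic, not_exists, not_and]
    exact forall_congr' fun j => ⟨fun h hj hd => (h hd).not_ge hj, fun h hd => not_le.1 (h · hd)⟩
  have hself : f i = d → d ∈ (Iic i).map f := by
    rintro rfl
    simp
  simp only [pairContribution, f.injective.eq_iff, exists_eq_left, hbelow]
  split_ifs <;> simp_all

theorem pairContribution_of_forall_ne {c : Fin n} (hc : ∀ i, f i ≠ c) :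
    pairContribution τ f c d = if d ∈ insert c (univ.map f) then 0 else τ := by
  simp only [pairContribution, mem_insert, mem_map, mem_univ, true_and, hc, false_and,
    exists_false, if_false, not_false_eq_true]
  split_ifs <;> simp_all

theorem sum_pairContribution_right :
    ∑ d, pairContribution τ f c d = topkWeight (bordaWeight n k τ) f c := by
  by_cases hc : ∃ i, f i = c
  · obtain ⟨i, rfl⟩ := hc
    simp only [pairContribution_apply_self, sum_ite_mem_zero, topkWeight_apply_self,
      bordaWeight, card_map, Fin.card_Iic, Fin.val_castSucc, i.isLt, if_true, Fintype.card_fin]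
    push_cast
    ring
  · push Not at hc
    have hcard : #(insert c (univ.map f)) = k + 1 := by
      rw [card_insert_of_notMem (by simpa using hc), card_map, card_univ, Fintype.card_fin]
    simp only [pairContribution_of_forall_ne τ f _ hc, sum_ite_mem_zero, hcard,
      topkWeight_of_forall_ne _ f hc, bordaWeight, Fin.val_last, lt_irrefl, if_false,
      Fintype.card_fin]
    push_cast
    ring

-- The antisymmetric part of `pairContribution τ f` does not depend on `τ`, and for `τ = 1 / 2` the
-- two entries of a pair sum to `1`.
theorem pairContribution_swap :
    pairContribution τ f d c =
      pairContribution τ f c d - 2 * pairContribution (1 / 2) f c d + if d = c then 0 else 1 := by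
  rcases eq_or_ne d c with rfl | hdc
  · simp [pairContribution]
  by_cases hc : ∃ i, f i = c <;> by_cases hd : ∃ j, f j = d
  · obtain ⟨i, rfl⟩ := hc
    obtain ⟨j, rfl⟩ := hd
    rcases lt_or_gt_of_ne (f.injective.ne_iff.1 hdc) with hji | hij
    · simp [pairContribution, hji, hji.ne, hji.ne', hji.not_gt]
    · norm_num [pairContribution, hij, hij.ne, hij.ne', hij.not_gt]
  · obtain ⟨i, rfl⟩ := hc
    push Not at hd
    norm_num [pairContribution, hd, hdc]
  · obtain ⟨j, rfl⟩ := hd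
    push Not at hc
    simp [pairContribution, hc, hdc.symm]
  · push Not at hc hd
    simp [pairContribution, hc, hd, hdc, hdc.symm]

theorem sum_pairContribution_left :
    ∑ d, pairContribution τ f d c =
      topkWeight (bordaWeight n k τ) f c - 2 * topkWeight (bordaWeight n k (1 / 2)) f c
        + (n - 1) := by
  have hn : (∑ d : Fin n, if d = c then (0 : ℚ) else 1) = n - 1 := by
    simpa using sum_ite_mem_zero {c} (1 : ℚ)
  simp only [pairContribution_swap τ f c, sum_add_distrib, sum_sub_distrib, ← mul_sum,
    sum_pairContribution_right, hn]

theorem sum_extendWeight_bordaWeight_pos {τ : ℚ} (hk : 0 < k) (hkn : k < n) (hτ : 0 ≤ τ) :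
    0 < ∑ j, extendWeight n k (bordaWeight n k τ) j := by
  have hkn' : (k : ℚ) + 1 ≤ n := mod_cast hkn
  have hk' : (0 : ℚ) < k := mod_cast hk
  refine sum_pos' (fun j _ => ?_) ⟨⟨0, hk.trans hkn⟩, mem_univ _, ?_⟩
  · by_cases hj : (j : ℕ) < k
    · have hj' : ((j : ℕ) : ℚ) < k := mod_cast hj
      simp only [extendWeight, bordaWeight, hj, dif_pos, if_pos]
      linarith
    · simpa [extendWeight, bordaWeight, hj] using mul_nonneg hτ (by linarith)
  · have hn : (1 : ℚ) < n := by linarith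
    simpa [extendWeight, bordaWeight, hk] using hn

end Borda

section Recovery

variable {n k : ℕ} {τ : ℚ} {w : Fin (k + 1) → ℚ}

/-- `r c a b` is the coefficient of the pair `(a, b)` in a linear functional that computes the
score of candidate `c` from the pair tallies of every single ballot. These are the matrix entries
of a linear map recovering `T_w` from `P^k_τ`. -/
def IsRecoveryKernel (τ : ℚ) (w : Fin (k + 1) → ℚ) (r : Fin n → Fin n → Fin n → ℚ) : Prop :=
  ∀ f c, topkWeight w f c = ∑ a, ∑ b, r c a b * pairContribution τ f a b

theorem exists_topkPositionalMap_eq_comp_iff_exists_isRecoveryKernel :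
    (∃ R : (Fin n × Fin n → ℚ) →ₗ[ℚ] (Fin n → ℚ),
        topkPositionalMap n k w = R ∘ₗ generalizedPairsMap n k τ) ↔
      ∃ r : Fin n → Fin n → Fin n → ℚ, IsRecoveryKernel τ w r := by
  let M : Matrix (Fin n) (Fin k ↪ Fin n) ℚ := .of fun c f => topkWeight w f c
  let N : Matrix (Fin n × Fin n) (Fin k ↪ Fin n) ℚ :=
    .of fun cd f => pairContribution τ f cd.1 cd.2
  have hM : topkPositionalMap n k w = M.mulVecLin := by
    ext p c
    simp [topkPositionalMap, M, Matrix.mulVec, dotProduct, mul_comm]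
  have hN : generalizedPairsMap n k τ = N.mulVecLin := by
    ext p cd
    simp [generalizedPairsMap, N, Matrix.mulVec, dotProduct, mul_comm]
  have hentries (Q : Matrix (Fin n) (Fin n × Fin n) ℚ) :
      M = Q * N ↔ IsRecoveryKernel τ w fun c a b => Q c (a, b) := by
    simp only [← Matrix.ext_iff, Matrix.mul_apply, Fintype.sum_prod_type, M, N, Matrix.of_apply]
    exact forall_comm
  rw [hM, hN, exists_mulVecLin_eq_comp_iff]
  simp only [hentries]
  exact ⟨fun ⟨Q, hQ⟩ => ⟨_, hQ⟩, fun ⟨r, hr⟩ => ⟨fun c ab => r c ab.1 ab.2, hr⟩⟩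

theorem IsRecoveryKernel.expect_perm {r : Fin n → Fin n → Fin n → ℚ}
    (hr : IsRecoveryKernel τ w r) :
    IsRecoveryKernel τ w fun c a b => 𝔼 σ : Equiv.Perm (Fin n), r (σ c) (σ a) (σ b) := by
  intro f c
  have hσ (σ : Equiv.Perm (Fin n)) : topkWeight w f c =
      ∑ a, ∑ b, r (σ c) (σ a) (σ b) * pairContribution τ f a b := by
    rw [← topkWeight_trans_perm w f σ c, hr, ← Equiv.sum_comp σ]
    refine sum_congr rfl fun a _ => ?_
    rw [← Equiv.sum_comp σ]
    simp only [pairContribution_trans_perm]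
  calc topkWeight w f c
      = 𝔼 _σ : Equiv.Perm (Fin n), topkWeight w f c := (Fintype.expect_const _).symm
    _ = 𝔼 σ : Equiv.Perm (Fin n), ∑ a, ∑ b, r (σ c) (σ a) (σ b) * pairContribution τ f a b :=
        expect_congr rfl fun σ _ => hσ σ
    _ = ∑ a, ∑ b, (𝔼 σ : Equiv.Perm (Fin n), r (σ c) (σ a) (σ b)) * pairContribution τ f a b := by
        simp only [expect_sum_comm, expect_mul]

theorem exists_isRecoveryKernel_iff :
    (∃ r : Fin n → Fin n → Fin n → ℚ, IsRecoveryKernel τ w r) ↔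
      ∃ x y z : ℚ, ∀ (f : Fin k ↪ Fin n) c, topkWeight w f c =
        x * ∑ d, pairContribution τ f c d + y * ∑ d, pairContribution τ f d c +
          z * ∑ a, ∑ b, pairContribution τ f a b := by
  simp only [← sum_ite_add_ite_add_mul]
  constructor
  · rintro ⟨r, hr⟩
    obtain ⟨x, y, z, hxyz⟩ := exists_eq_ite_add_ite_add_of_perm_invariant
      (ρ := fun c a b => 𝔼 σ : Equiv.Perm (Fin n), r (σ c) (σ a) (σ b))
      fun π c a b => Fintype.expect_equiv (Equiv.mulRight π) _ _ fun σ => rfl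
    refine ⟨x, y, z, fun f c => (hr.expect_perm f c).trans ?_⟩
    refine sum_congr rfl fun a _ => sum_congr rfl fun b _ => ?_
    rcases eq_or_ne a b with rfl | hab
    · simp only [pairContribution_self, mul_zero]
    · exact congrArg (· * _) (hxyz c a b hab)
  · rintro ⟨x, y, z, h⟩
    exact ⟨_, h⟩

theorem exists_isRecoveryKernel_iff_topkWeight_eq_bordaWeight
    (hτ : ∑ j, extendWeight n k (bordaWeight n k τ) j ≠ 0) :
    (∃ r : Fin n → Fin n → Fin n → ℚ, IsRecoveryKernel τ w r) ↔
      ∃ x y z : ℚ, ∀ (f : Fin k ↪ Fin n) c, topkWeight w f c =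
        x * topkWeight (bordaWeight n k (1 / 2)) f c + y * topkWeight (bordaWeight n k τ) f c
          + z := by
  simp only [exists_isRecoveryKernel_iff, sum_pairContribution_left, sum_pairContribution_right,
    sum_topkWeight]
  set S := ∑ j, extendWeight n k (bordaWeight n k τ) j
  constructor
  · rintro ⟨x, y, z, h⟩
    refine ⟨-2 * y, x + y, y * (n - 1) + z * S, fun f c => ?_⟩
    rw [h]
    ring
  · rintro ⟨x, y, z, h⟩
    refine ⟨y + x / 2, -x / 2, (z + x / 2 * (n - 1)) / S, fun f c => ?_⟩
    rw [h, div_mul_cancel₀ _ hτ]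
    ring

theorem topk_recoverable_iff_borda_like_general (hk : k ≤ n)
    (hτ : ∑ j, extendWeight n k (bordaWeight n k τ) j ≠ 0) :
    (∃ R : (Fin n × Fin n → ℚ) →ₗ[ℚ] (Fin n → ℚ),
        topkPositionalMap n k w = R ∘ₗ generalizedPairsMap n k τ) ↔
      sumZeroPart n (extendWeight n k w) ∈
        Submodule.span ℚ
          {sumZeroPart n (extendWeight n k (bordaWeight n k (1 / 2))),
            sumZeroPart n (extendWeight n k (bordaWeight n k τ))} := by
  rw [exists_topkPositionalMap_eq_comp_iff_exists_isRecoveryKernel,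
    exists_isRecoveryKernel_iff_topkWeight_eq_bordaWeight hτ, sumZeroPart_mem_span_pair_iff]
  simp only [forall_topkWeight_eq_iff_extendWeight hk]

end Recovery

/-- For `n ≥ 3`, `1 ≤ k ≤ n − 2` and `0 ≤ τ ≤ 1`, the
positional map `T_w` on top-`k` profiles is recoverable from the generalized
pairs map `P^k_τ` if and only if the sum-zero part of the extension `w̄` lies
in the `ℚ`-span of the sum-zero parts of `b̄` and `b̄^τ`, where
`b(i) = b^τ(i) = n − 1 − i` for `i < k`, `b(k) = (n − k − 1)/2` and
`b^τ(k) = τ·(n − k − 1)`. -/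
theorem topk_recoverable_iff_borda_like (n k : ℕ) (hn : 3 ≤ n)
    (hk1 : 1 ≤ k) (hk2 : k ≤ n - 2)
    (τ : ℚ) (hτ0 : 0 ≤ τ) (hτ1 : τ ≤ 1)
    (w : Fin (k + 1) → ℚ) :
    (∃ R : (Fin n × Fin n → ℚ) →ₗ[ℚ] (Fin n → ℚ),
        topkPositionalMap n k w = R ∘ₗ generalizedPairsMap n k τ) ↔
      sumZeroPart n (extendWeight n k w) ∈
        Submodule.span ℚ
          {sumZeroPart n (extendWeight n k
              (fun i : Fin (k + 1) => if (i : ℕ) < k then (n : ℚ) - 1 - ((i : ℕ) : ℚ)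
                else ((n : ℚ) - k - 1) / 2)),
            sumZeroPart n (extendWeight n k
              (fun i : Fin (k + 1) => if (i : ℕ) < k then (n : ℚ) - 1 - ((i : ℕ) : ℚ)
                else τ * ((n : ℚ) - k - 1)))} := by
  rw [← bordaWeight_one_half]
  exact topk_recoverable_iff_borda_like_general (by omega)
    (sum_extendWeight_bordaWeight_pos hk1 (by omega) hτ0).ne'
end
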